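/- arXiv:2506.09716 — 6 statements merged into one kernel-verified Lean document; each statement's English description precedes it below -/
import Mathlib

section
/- Let a₁ > 0 and m > 1 be real numbers. Then there exists a constant K₁ > 0 (depending only on a₁ and m) such that for every k ≥ K₁ there exists a number x̃ with k⁻¹ < x̃ < k^(−1/3) satisfying: ∫_{−k⁻¹}^{x̃} k · U(s)^m ds < 1 and U′(x̃) ≥ log k, where U(x) := k⁻² · cosh(√(a₁ k) · x). -/
/-!
Write `ω = √(a₁ k) = √a₁ · k^(1/2)` and take `xt = p · log k / ω` with `p = 3/2 + ε`,
`ε = (m - 1) / (4 m)`, so that `exp (ω xt) = k ^ p`. Up to constants, `U′(xt)` is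
`k⁻² · ω · k ^ p = √a₁ · k ^ ε`, which dominates `log k`. On the interval of integration `|s| ≤ xt`,
hence `U ≤ k ^ (p - 2) = k ^ (-1/2 + ε)`, and the interval has length at most `2 xt`; the integral is
therefore at most a constant times `log k · k ^ (1/2 + m (-1/2 + ε)) = log k · k ^ (-(m - 1) / 4)`,
which tends to `0`. Every requirement thus reduces to `C · log k < k ^ r` for large `k`
(`eventually_mul_log_lt_rpow`).
-/

open Real intervalIntegral

lemma eventually_mul_log_lt_rpow (C r : ℝ) (hr : 0 < r) :
    ∀ᶠ k : ℝ in Filter.atTop, C * Real.log k < k ^ r := by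
  have h := (isLittleO_log_rpow_atTop hr).def (c := (|C| + 1)⁻¹) (by positivity)
  filter_upwards [h, Filter.eventually_gt_atTop (1 : ℝ)] with k hk h1
  have hL : 0 < Real.log k := Real.log_pos h1
  have hp : 0 < k ^ r := Real.rpow_pos_of_pos (by linarith) r
  rw [Real.norm_of_nonneg hL.le, Real.norm_of_nonneg hp.le, inv_mul_eq_div,
    le_div_iff₀ (by positivity)] at hk
  nlinarith [le_abs_self C]

lemma cosh_le_exp_of_abs_le {x y : ℝ} (h : |x| ≤ y) : Real.cosh x ≤ Real.exp y := by
  have h1 := Real.exp_le_exp.2 ((le_abs_self x).trans h)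
  have h2 := Real.exp_le_exp.2 ((neg_le_abs x).trans h)
  rw [Real.cosh_eq]
  linarith

lemma exp_div_four_le_sinh {y : ℝ} (h : 2 ≤ Real.exp y) : Real.exp y / 4 ≤ Real.sinh y := by
  have h1 : Real.exp (-y) ≤ 1 := Real.exp_le_one_iff.2 (by
    by_contra! hy
    have := Real.exp_le_one_iff.2 (neg_pos.1 hy).le
    linarith)
  rw [Real.sinh_eq]
  linarith

/-- cosh barrier for `m > 1`: there is `K₁ = K₁(a₁, m) > 0` such that for
every `k ≥ K₁` there is `xt ∈ (k⁻¹, k^(-1/3))` with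
`∫_{-k⁻¹}^{xt} k · U(s)^m ds < 1` and `U′(xt) ≥ log k`, where
`U(x) = k⁻² · cosh(√(a₁ k) · x)`. -/
theorem stmt0 (a₁ m : ℝ) (ha₁ : 0 < a₁) (hm : 1 < m) :
    ∃ K₁ : ℝ, 0 < K₁ ∧ ∀ k : ℝ, K₁ ≤ k →
      ∃ xt : ℝ, k⁻¹ < xt ∧ xt < k ^ (-(1 : ℝ)/3) ∧
        (∫ s in (-k⁻¹)..xt,
            k * (k ^ (-(2 : ℝ)) * Real.cosh (Real.sqrt (a₁ * k) * s)) ^ m) < 1 ∧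
        Real.log k ≤
          deriv (fun x : ℝ => k ^ (-(2 : ℝ)) * Real.cosh (Real.sqrt (a₁ * k) * x)) xt := by
  obtain ⟨ε, hε⟩ : ∃ ε, ε = (m - 1) / (4 * m) := ⟨_, rfl⟩
  have hm1 : 0 < m - 1 := by linarith
  have hε0 : 0 < ε := by rw [hε]; positivity
  have hmε : m * ε = (m - 1) / 4 := by rw [hε]; field_simp
  obtain ⟨p, hp⟩ : ∃ p, p = 3 / 2 + ε := ⟨_, rfl⟩
  have hp0 : 1 < p := by linarith
  obtain ⟨b, hb⟩ : ∃ b, b = Real.sqrt a₁ := ⟨_, rfl⟩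
  have hb0 : 0 < b := by rw [hb]; positivity
  have hev := (Real.tendsto_log_atTop.eventually_gt_atTop b).and
    ((eventually_mul_log_lt_rpow (p / b) (1 / 6) (by norm_num)).and
    ((eventually_mul_log_lt_rpow (2 * p / b) ((m - 1) / 4) (by positivity)).and
    (eventually_mul_log_lt_rpow (4 / b) ε hε0)))
  obtain ⟨K, hK⟩ := Filter.eventually_atTop.1 hev
  refine ⟨max K 2, by positivity, fun k hk => ?_⟩
  obtain ⟨c1, c2, c3, c4⟩ := hK k ((le_max_left _ _).trans hk)
  have hk2 : 2 ≤ k := (le_max_right _ _).trans hk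
  have hk0 : 0 < k := by linarith
  have hL : 0 < Real.log k := Real.log_pos (by linarith)
  obtain ⟨w, hw⟩ : ∃ w, w = Real.sqrt (a₁ * k) := ⟨_, rfl⟩
  have hwb : w = b * k ^ (1 / 2 : ℝ) := by
    rw [hw, hb, Real.sqrt_mul ha₁.le, Real.sqrt_eq_rpow k]
  have hw0 : 0 < w := by rw [hwb]; positivity
  rw [← hw]
  obtain ⟨x, hx⟩ : ∃ x, x = p * Real.log k / w := ⟨_, rfl⟩
  have hwx : w * x = p * Real.log k := by rw [hx]; field_simp
  have hexp : Real.exp (w * x) = k ^ p := by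
    rw [hwx, Real.rpow_def_of_pos hk0, mul_comm]
  have hxk : k⁻¹ < x := by
    rw [hx, lt_div_iff₀ hw0, inv_mul_lt_iff₀ hk0, hwb]
    have h1 : k ^ (1 / 2 : ℝ) ≤ k := by
      simpa using Real.rpow_le_rpow_of_exponent_le (x := k) (by linarith)
        (by norm_num : (1 / 2 : ℝ) ≤ 1)
    have h2 : b < p * Real.log k := by nlinarith
    calc b * k ^ (1 / 2 : ℝ) ≤ b * k := by gcongr
      _ < p * Real.log k * k := by gcongr
      _ = _ := by ring
  have hx0 : 0 < x := (inv_pos.2 hk0).trans hxk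
  refine ⟨x, hxk, ?_, ?_, ?_⟩
  · have h : k ^ (1 / 6 : ℝ) = k ^ (-(1 : ℝ) / 3) * k ^ (1 / 2 : ℝ) := by
      rw [← Real.rpow_add hk0]; norm_num
    rw [hx, div_lt_iff₀ hw0, hwb]
    rw [h, div_mul_eq_mul_div, div_lt_iff₀ hb0] at c2
    linarith
  · have hbd : ∀ s ∈ Set.uIoc (-k⁻¹) x,
        ‖k * (k ^ (-(2 : ℝ)) * Real.cosh (w * s)) ^ m‖ ≤ k * (k ^ (-(1 : ℝ) / 2 + ε)) ^ m := by
      intro s hs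
      rw [Set.uIoc_of_le (by linarith [inv_pos.2 hk0])] at hs
      have hs' : |w * s| ≤ w * x := by
        rw [abs_mul, abs_of_pos hw0]
        gcongr
        exact abs_le.2 ⟨by linarith [hs.1], hs.2⟩
      have h1 := cosh_le_exp_of_abs_le hs'
      have h2 : 0 < Real.cosh (w * s) := Real.cosh_pos _
      rw [Real.norm_of_nonneg (by positivity)]
      gcongr
      calc k ^ (-(2 : ℝ)) * Real.cosh (w * s) ≤ k ^ (-(2 : ℝ)) * k ^ p := by
            rw [← hexp]; gcongr
        _ = k ^ (-(1 : ℝ) / 2 + ε) := by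
            rw [← Real.rpow_add hk0, hp]; congr 1; ring
    have hI := intervalIntegral.norm_integral_le_of_norm_le_const hbd
    refine lt_of_le_of_lt ((le_abs_self _).trans hI) ?_
    rw [abs_of_pos (by linarith [inv_pos.2 hk0])]
    have hkw : k * (k ^ (-(1 : ℝ) / 2 + ε)) ^ m * k ^ ((m - 1) / 4) = k ^ (1 / 2 : ℝ) := by
      rw [← Real.rpow_mul hk0.le]
      nth_rewrite 1 [← Real.rpow_one k]
      rw [← Real.rpow_add hk0, ← Real.rpow_add hk0]
      congr 1
      linear_combination hmε
    have hA : 0 < k * (k ^ (-(1 : ℝ) / 2 + ε)) ^ m := by positivity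
    have hx2 : 2 * x * k ^ (1 / 2 : ℝ) = 2 * p / b * Real.log k := by
      rw [hx, hwb]; field_simp
    have hq : 0 < k ^ (1 / 2 : ℝ) := by positivity
    calc k * (k ^ (-(1 : ℝ) / 2 + ε)) ^ m * (x - -k⁻¹)
        < k * (k ^ (-(1 : ℝ) / 2 + ε)) ^ m * (2 * x) := by gcongr; linarith
      _ ≤ 1 := by
        refine le_of_mul_le_mul_right ?_ hq
        calc k * (k ^ (-(1 : ℝ) / 2 + ε)) ^ m * (2 * x) * k ^ (1 / 2 : ℝ)
            = k * (k ^ (-(1 : ℝ) / 2 + ε)) ^ m * (2 * p / b * Real.log k) := by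
              rw [← hx2]; ring
          _ ≤ k * (k ^ (-(1 : ℝ) / 2 + ε)) ^ m * k ^ ((m - 1) / 4) := by gcongr
          _ = 1 * k ^ (1 / 2 : ℝ) := by rw [hkw, one_mul]
  · have hd : HasDerivAt (fun x : ℝ => k ^ (-(2 : ℝ)) * Real.cosh (w * x))
        (k ^ (-(2 : ℝ)) * (Real.sinh (w * x) * (w * 1))) x :=
      (((hasDerivAt_id x).const_mul w).cosh).const_mul _
    rw [hd.deriv]
    have h2 : 2 ≤ Real.exp (w * x) := by
      rw [hexp]
      have := Real.rpow_le_rpow_of_exponent_le (x := k) (by linarith) hp0.le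
      rw [Real.rpow_one] at this
      linarith
    have h3 := exp_div_four_le_sinh h2
    rw [hexp] at h3
    have h4 : k ^ (-(2 : ℝ)) * (k ^ p / 4 * (w * 1)) = b / 4 * k ^ ε := by
      have : k ^ ε = k ^ (-(2 : ℝ)) * k ^ p * k ^ (1 / 2 : ℝ) := by
        rw [← Real.rpow_add hk0, ← Real.rpow_add hk0, hp]; congr 1; ring
      rw [this, hwb]; ring
    calc Real.log k = b / 4 * (4 / b * Real.log k) := by field_simp
      _ ≤ b / 4 * k ^ ε := by gcongr
      _ = k ^ (-(2 : ℝ)) * (k ^ p / 4 * (w * 1)) := h4.symm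
      _ ≤ _ := by gcongr
end

section
/- Let a₁ > 0. Then there exists a constant K₁ > 0 (depending only on a₁) such that for every k ≥ K₁ there exists a number x̃ with k⁻¹ < x̃ < k^(−1/3) satisfying: ∫_{−k⁻¹}^{x̃} k · U(s) ds < 1 and U(x̃) ≥ 2 k^(−2/3), where U(x) := k⁻² · cosh(√(a₁ k) · x). -/
/-!
Write `c = √a₁` and `t = k^(1/6)`, so that `k = t⁶` and `√(a₁ k) = c t³`. The endpoint is chosen so
that `exp (√(a₁ k) · xt) = 4 k^(4/3) = 4 t⁸`, that is `xt = log (4 t⁸) / (c t³)`. Then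
`cosh (√(a₁ k) · xt) ≥ 2 t⁸`, which is the lower bound on `U xt`. The integral equals
`(sinh (log (4 t⁸)) + sinh (c t³ / k)) / (c t⁹)`; since `k⁻¹ < xt`, each `sinh` is at most `2 t⁸`,
so the integral is at most `4 / (c t)`, which is less than `1` for large `t`. The bounds
`k⁻¹ < xt < k^(-1/3)` read `c t⁻³ < log (4 t⁸) < c t`, and hold for large `t` because the logarithm
tends to infinity but is sublinear.
-/

open Real intervalIntegral

lemma eventually_log_lt {c : ℝ} (hc : 0 < c) :
    ∀ᶠ t : ℝ in Filter.atTop, Real.log (4 * t ^ 8) < c * t := by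
  have h := Real.isLittleO_log_id_atTop.bound (show 0 < c / 16 by positivity)
  filter_upwards [h, Filter.eventually_ge_atTop 1,
    Filter.eventually_gt_atTop (2 * Real.log 4 / c)] with t h1 h2 h3
  have ht : 0 < t := by linarith
  rw [Real.log_mul (by norm_num) (by positivity), Real.log_pow]
  rw [div_lt_iff₀ hc] at h3
  simp only [id, Real.norm_eq_abs, abs_of_pos ht] at h1
  have := le_abs_self (Real.log t)
  push_cast
  nlinarith

/-- A primitive of `cosh (w s)` is `sinh (w s) / w`. -/
lemma integral_cosh_scaled {A w : ℝ} (hw : w ≠ 0) (a b : ℝ) :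
    ∫ s in a..b, A * Real.cosh (w * s) = A * (Real.sinh (w * b) - Real.sinh (w * a)) / w := by
  rw [integral_eq_sub_of_hasDerivAt (f := fun s => A * Real.sinh (w * s) / w)]
  · ring
  · intro x _
    have h : HasDerivAt (fun s => A * Real.sinh (w * s) / w)
        (A * (Real.cosh (w * x) * (w * 1)) / w) x :=
      ((((hasDerivAt_id x).const_mul w).sinh).const_mul A).div_const w
    rwa [show A * (Real.cosh (w * x) * (w * 1)) / w = A * Real.cosh (w * x) by
      field_simp] at h
  · exact Continuous.intervalIntegrable (by fun_prop) _ _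

/-- The barrier estimates in terms of `t = k^(1/6)` and `c = √a₁`. -/
lemma barrier_pow {c t : ℝ} (hc : 0 < c) (ht : 1 ≤ t) (hct : c < t) (h4 : 4 < c * t)
    (hlog : Real.log (4 * t ^ 8) < c * t) :
    ∃ xt : ℝ, (t ^ 6)⁻¹ < xt ∧ xt < (t ^ 2)⁻¹ ∧
      (∫ s in (-(t ^ 6)⁻¹)..xt, t ^ 6 * ((t ^ 12)⁻¹ * Real.cosh (c * t ^ 3 * s))) < 1 ∧
      2 * (t ^ 4)⁻¹ ≤ (t ^ 12)⁻¹ * Real.cosh (c * t ^ 3 * xt) := by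
  have ht0 : 0 < t := by linarith
  have hw : 0 < c * t ^ 3 := by positivity
  have hL : 1 < Real.log (4 * t ^ 8) := by
    rw [Real.lt_log_iff_exp_lt (by positivity)]
    have := Real.exp_one_lt_d9
    have := one_le_pow₀ ht (n := 8)
    linarith
  set L := Real.log (4 * t ^ 8) with hLdef
  have hexp : Real.exp L = 4 * t ^ 8 := Real.exp_log (by positivity)
  have hmul : c * t ^ 3 * (L / (c * t ^ 3)) = L := by field_simp
  have hsmall : c * t ^ 3 * (t ^ 6)⁻¹ < L := by
    have h1 : c * t ^ 3 * (t ^ 6)⁻¹ ≤ 1 := by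
      rw [← div_eq_mul_inv, div_le_one (by positivity)]
      have h2 : t ≤ t ^ 3 := le_self_pow₀ ht (by norm_num)
      calc c * t ^ 3 ≤ t ^ 3 * t ^ 3 := by gcongr; linarith
        _ = t ^ 6 := by ring
    linarith
  have hsinhL : Real.sinh L ≤ 2 * t ^ 8 := by
    rw [Real.sinh_eq, hexp]
    have := Real.exp_pos (-L)
    linarith
  refine ⟨L / (c * t ^ 3), ?_, ?_, ?_, ?_⟩
  · rw [lt_div_iff₀ hw]
    linarith
  · rw [div_lt_iff₀ hw]
    have : (t ^ 2)⁻¹ * (c * t ^ 3) = c * t := by field_simp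
    linarith
  · simp only [← mul_assoc]
    rw [integral_cosh_scaled hw.ne', hmul, mul_neg, Real.sinh_neg, sub_neg_eq_add,
      div_lt_one hw]
    have h1 : Real.sinh (c * t ^ 3 * (t ^ 6)⁻¹) ≤ Real.sinh L :=
      Real.sinh_le_sinh.2 hsmall.le
    calc t ^ 6 * (t ^ 12)⁻¹ * (Real.sinh L + Real.sinh (c * t ^ 3 * (t ^ 6)⁻¹))
        ≤ t ^ 6 * (t ^ 12)⁻¹ * (4 * t ^ 8) := by gcongr; linarith
      _ = 4 * t ^ 2 := by field_simp
      _ < c * t * t ^ 2 := by gcongr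
      _ = c * t ^ 3 := by ring
  · rw [hmul]
    have h1 : 2 * t ^ 8 ≤ Real.cosh L := by
      rw [Real.cosh_eq, hexp]
      have := Real.exp_pos (-L)
      linarith
    calc 2 * (t ^ 4)⁻¹ = (t ^ 12)⁻¹ * (2 * t ^ 8) := by field_simp
      _ ≤ _ := by gcongr

/-- cosh barrier for `m = 1`: there is `K₁ = K₁(a₁) > 0` such that for every
`k ≥ K₁` there is `xt ∈ (k⁻¹, k^(-1/3))` with `∫_{-k⁻¹}^{xt} k · U(s) ds < 1` and
`U(xt) ≥ 2 k^(-2/3)`, where `U(x) = k⁻² · cosh(√(a₁ k) · x)`. -/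
theorem stmt1 (a₁ : ℝ) (ha₁ : 0 < a₁) :
    ∃ K₁ : ℝ, 0 < K₁ ∧ ∀ k : ℝ, K₁ ≤ k →
      ∃ xt : ℝ, k⁻¹ < xt ∧ xt < k ^ (-(1 : ℝ)/3) ∧
        (∫ s in (-k⁻¹)..xt,
            k * (k ^ (-(2 : ℝ)) * Real.cosh (Real.sqrt (a₁ * k) * s))) < 1 ∧
        2 * k ^ (-(2 : ℝ)/3) ≤ k ^ (-(2 : ℝ)) * Real.cosh (Real.sqrt (a₁ * k) * xt) := by
  have hc : 0 < Real.sqrt a₁ := Real.sqrt_pos.2 ha₁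
  have hev : ∀ᶠ t : ℝ in Filter.atTop, 1 ≤ t ∧ Real.sqrt a₁ < t ∧ 4 < Real.sqrt a₁ * t ∧
      Real.log (4 * t ^ 8) < Real.sqrt a₁ * t := by
    filter_upwards [eventually_log_lt hc, Filter.eventually_ge_atTop 1,
      Filter.eventually_gt_atTop (Real.sqrt a₁),
      Filter.eventually_gt_atTop (4 / Real.sqrt a₁)] with t h1 h2 h3 h4
    rw [div_lt_iff₀' hc] at h4
    exact ⟨h2, h3, h4, h1⟩
  have hev' := (tendsto_rpow_atTop (show (0 : ℝ) < 1 / 6 by norm_num)).eventually hev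
  obtain ⟨K, hK⟩ := Filter.eventually_atTop.1 hev'
  refine ⟨max K 1, by positivity, fun k hk => ?_⟩
  have hk0 : 0 < k := lt_of_lt_of_le one_pos ((le_max_right _ _).trans hk)
  obtain ⟨h1, h2, h3, h4⟩ := hK k ((le_max_left _ _).trans hk)
  have hb := barrier_pow hc h1 h2 h3 h4
  have ht0 : 0 < k ^ ((1 : ℝ) / 6) := by positivity
  have hkt : (k ^ ((1 : ℝ) / 6)) ^ 6 = k := by
    rw [← Real.rpow_natCast, ← Real.rpow_mul hk0.le]; norm_num
  have e2 : k ^ (-(1 : ℝ) / 3) = ((k ^ ((1 : ℝ) / 6)) ^ 2)⁻¹ := by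
    rw [← Real.rpow_natCast, ← Real.rpow_mul hk0.le, ← Real.rpow_neg hk0.le]; norm_num
  have e4 : k ^ (-(2 : ℝ) / 3) = ((k ^ ((1 : ℝ) / 6)) ^ 4)⁻¹ := by
    rw [← Real.rpow_natCast, ← Real.rpow_mul hk0.le, ← Real.rpow_neg hk0.le]; norm_num
  have e12 : k ^ (-(2 : ℝ)) = ((k ^ ((1 : ℝ) / 6)) ^ 12)⁻¹ := by
    rw [← Real.rpow_natCast, ← Real.rpow_mul hk0.le, ← Real.rpow_neg hk0.le]; norm_num
  have ew : Real.sqrt (a₁ * k) = Real.sqrt a₁ * (k ^ ((1 : ℝ) / 6)) ^ 3 := by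
    rw [Real.sqrt_mul ha₁.le, Real.sqrt_eq_rpow k, ← Real.rpow_natCast, ← Real.rpow_mul hk0.le]
    norm_num
  rw [e2, e4, e12, ew]
  rw [hkt] at hb
  exact hb
end

section
/- Let 0 < a₂ ≤ 1 and b₂ ≥ 1 be real numbers and let k ≥ b₂⁶. Suppose U is of class C² on [0, k^(−1/6)] with U(0) = k^(−2/3), U′(0) = 0, and U″(x) = a₂ k U(x) / (k ∫₀ˣ U(y) dy + b₂) for all x ∈ [0, k^(−1/6)]. Then U″(x) ≥ (a₂/2) · k^(1/6) for every x ∈ [0, k^(−1/6)]. -/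
open Real intervalIntegral Set

/-!
As long as `U > 0` the equation makes `U″` positive, so `U′` increases from `0` and `U` is
nondecreasing (`monotoneOn_of_pos`). A first zero of `U` is then impossible, since `U` would be at
least `U 0 > 0` there, so `U` is positive and nondecreasing on the whole interval (`pos_of_ode`).

Write `s = k ^ (1/6) ≥ b`, so that the interval is `[0, 1/s]`, `k = s⁶` and `U 0 = s⁻⁴`.
Monotonicity gives `∫₀ˣ U ≤ x U(x) ≤ U(x) / s`, so that `k ∫₀ˣ U ≤ s⁵ U(x)`, while
`b ≤ s = s⁵ U(0) ≤ s⁵ U(x)`. The denominator is thus at most `2 s⁵ U(x)`, which is the claim.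

The derivatives are those of a function on all of `ℝ`; at `0` this does no harm, because
`deriv (deriv U) 0 ≠ 0` forces `deriv U` to be differentiable, hence continuous, at `0`.
-/

/-- Positivity on the half-open interval `[0, c)` suffices for monotonicity on `[0, c]`; this is
what allows `c` to be a hypothetical first zero of `U`. -/
lemma monotoneOn_of_pos {a b k L c : ℝ} {U : ℝ → ℝ} (ha : 0 < a) (hb : 0 < b) (hk : 0 < k)
    (hC : ContDiffOn ℝ 2 U (Icc 0 L)) (hU' : deriv U 0 = 0)
    (hODE : ∀ x ∈ Icc (0 : ℝ) L,
      deriv (deriv U) x = a * k * U x / (k * (∫ y in (0 : ℝ)..x, U y) + b))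
    (hc : 0 < c) (hcL : c ≤ L) (hpos : ∀ x ∈ Ico 0 c, 0 < U x) :
    MonotoneOn U (Icc 0 c) := by
  have h2 : ∀ x ∈ Ico 0 c, 0 < deriv (deriv U) x := by
    intro x hx
    rw [hODE x ⟨hx.1, hx.2.le.trans hcL⟩]
    have hI : 0 ≤ ∫ y in (0 : ℝ)..x, U y :=
      intervalIntegral.integral_nonneg hx.1 fun y hy => (hpos y ⟨hy.1, hy.2.trans_lt hx.2⟩).le
    have := hpos x hx
    positivity
  -- A nonzero value of `deriv` is never a junk value.
  have hd : ∀ x ∈ Ico 0 c, DifferentiableAt ℝ (deriv U) x := fun x hx =>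
    differentiableAt_of_deriv_ne_zero (h2 x hx).ne'
  have hmono : MonotoneOn (deriv U) (Ico 0 c) := by
    refine monotoneOn_of_deriv_nonneg (convex_Ico 0 c)
      (fun x hx => (hd x hx).continuousAt.continuousWithinAt)
      (fun x hx => (hd x (interior_subset hx)).differentiableWithinAt)
      (fun x hx => (h2 x (interior_subset hx)).le)
  refine monotoneOn_of_deriv_nonneg (convex_Icc 0 c)
    (hC.continuousOn.mono (Icc_subset_Icc_right hcL)) ?_ ?_
  · exact (hC.differentiableOn (by norm_num)).mono
      (interior_subset.trans (Icc_subset_Icc_right hcL))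
  · intro x hx
    rw [interior_Icc] at hx
    rw [← hU']
    exact hmono ⟨le_rfl, hc⟩ ⟨hx.1.le, hx.2⟩ hx.1.le

lemma pos_of_ode {a b k L : ℝ} {U : ℝ → ℝ} (ha : 0 < a) (hb : 0 < b) (hk : 0 < k)
    (hC : ContDiffOn ℝ 2 U (Icc 0 L)) (hU0 : 0 < U 0) (hU' : deriv U 0 = 0)
    (hODE : ∀ x ∈ Icc (0 : ℝ) L,
      deriv (deriv U) x = a * k * U x / (k * (∫ y in (0 : ℝ)..x, U y) + b)) :
    ∀ x ∈ Icc 0 L, 0 < U x := by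
  by_contra! hne
  obtain ⟨x₀, hx₀, hUx₀⟩ := hne
  have hcl : IsClosed (Icc 0 L ∩ U ⁻¹' Iic 0) :=
    hC.continuousOn.preimage_isClosed_of_isClosed isClosed_Icc isClosed_Iic
  obtain ⟨c, ⟨hc, hUc⟩, hleast⟩ :=
    (isCompact_Icc.of_isClosed_subset hcl inter_subset_left).exists_isLeast ⟨x₀, hx₀, hUx₀⟩
  have hUc : U c ≤ 0 := hUc
  have hc0 : 0 < c := by
    rcases hc.1.eq_or_lt with h | h
    · rw [← h] at hUc
      exact absurd hU0 hUc.not_gt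
    · exact h
  have hm := monotoneOn_of_pos ha hb hk hC hU' hODE hc0 hc.2 fun x hx => by
    by_contra! h
    exact (hleast ⟨⟨hx.1, hx.2.le.trans hc.2⟩, h⟩).not_gt hx.2
  linarith [hm ⟨le_rfl, hc0.le⟩ ⟨hc0.le, le_rfl⟩ hc0.le]

open Real intervalIntegral Set

/-- for `0 < a₂ ≤ 1`, `b₂ ≥ 1`, `k ≥ b₂⁶`, if `U` is `C²` on
`[0, k^(-1/6)]` with `U(0) = k^(-2/3)`, `U′(0) = 0` and
`U″(x) = a₂ k U(x) / (k ∫₀ˣ U + b₂)` there, then `U″(x) ≥ (a₂/2) k^(1/6)` on the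
interval. -/
theorem stmt7 (a₂ b₂ k : ℝ) (ha₂ : 0 < a₂) (ha₂' : a₂ ≤ 1) (hb₂ : 1 ≤ b₂)
    (hk : b₂ ^ (6 : ℕ) ≤ k)
    (U : ℝ → ℝ)
    (hC2 : ContDiffOn ℝ 2 U (Set.Icc 0 (k ^ (-(1 : ℝ)/6))))
    (hU0 : U 0 = k ^ (-(2 : ℝ)/3))
    (hU'0 : deriv U 0 = 0)
    (hODE : ∀ x ∈ Set.Icc (0 : ℝ) (k ^ (-(1 : ℝ)/6)),
      deriv (deriv U) x = a₂ * k * U x / (k * (∫ y in (0 : ℝ)..x, U y) + b₂)) :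
    ∀ x ∈ Set.Icc (0 : ℝ) (k ^ (-(1 : ℝ)/6)),
      (a₂ / 2) * k ^ ((1 : ℝ)/6) ≤ deriv (deriv U) x := by
  have hk0 : 0 < k := by
    have : (1 : ℝ) ≤ b₂ ^ 6 := one_le_pow₀ hb₂
    linarith
  have hs0 : 0 < k ^ ((1 : ℝ) / 6) := by positivity
  have hks : (k ^ ((1 : ℝ) / 6)) ^ 6 = k := by
    rw [← Real.rpow_natCast, ← Real.rpow_mul hk0.le]
    norm_num
  have hL : k ^ (-(1 : ℝ) / 6) = (k ^ ((1 : ℝ) / 6))⁻¹ := by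
    rw [← Real.rpow_neg hk0.le]
    norm_num
  have h0 : k ^ (-(2 : ℝ) / 3) = ((k ^ ((1 : ℝ) / 6)) ^ 4)⁻¹ := by
    rw [← Real.rpow_natCast, ← Real.rpow_mul hk0.le, ← Real.rpow_neg hk0.le]
    norm_num
  rw [hL] at hC2 hODE ⊢
  rw [h0] at hU0
  generalize k ^ ((1 : ℝ) / 6) = s at *
  have hbs : b₂ ≤ s := le_of_pow_le_pow_left₀ (by norm_num) hs0.le (hks ▸ hk)
  have hb0 : 0 < b₂ := by linarith
  have hpos := pos_of_ode ha₂ hb0 hk0 hC2 (by rw [hU0]; positivity) hU'0 hODE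
  have hm := monotoneOn_of_pos ha₂ hb0 hk0 hC2 hU'0 hODE (inv_pos.2 hs0) le_rfl
    fun x hx => hpos x ⟨hx.1, hx.2.le⟩
  intro x hx
  rw [hODE x hx]
  have hsub : Icc 0 x ⊆ Icc 0 s⁻¹ := Icc_subset_Icc_right hx.2
  have hI0 : 0 ≤ ∫ y in (0 : ℝ)..x, U y :=
    intervalIntegral.integral_nonneg hx.1 fun y hy => (hpos y (hsub hy)).le
  have hI1 : ∫ y in (0 : ℝ)..x, U y ≤ x * U x := by
    calc ∫ y in (0 : ℝ)..x, U y ≤ ∫ _ in (0 : ℝ)..x, U x := by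
          refine intervalIntegral.integral_mono_on hx.1 ?_ (by simp)
            fun y hy => hm (hsub hy) hx hy.2
          exact (hC2.continuousOn.mono (by rwa [uIcc_of_le hx.1])).intervalIntegrable
      _ = x * U x := by simp
  generalize (∫ y in (0 : ℝ)..x, U y) = I at *
  have hUx := hpos x hx
  have hsI : s * I ≤ U x := by
    have hsx : s * x ≤ 1 := by
      have := mul_le_mul_of_nonneg_left hx.2 hs0.le
      rwa [mul_inv_cancel₀ hs0.ne'] at this
    calc s * I ≤ s * x * U x := by nlinarith
      _ ≤ U x := by nlinarith
  have h1 : 1 ≤ s ^ 4 * U x := by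
    have := hm ⟨le_rfl, (inv_pos.2 hs0).le⟩ hx hx.1
    rw [hU0, inv_le_iff_one_le_mul₀' (by positivity)] at this
    exact this
  have h2 : k * I + b₂ ≤ 2 * (s ^ 5 * U x) := by
    have hA : s ^ 5 * (s * I) ≤ s ^ 5 * U x := by gcongr
    have hB : s * 1 ≤ s * (s ^ 4 * U x) := by gcongr
    have hC : k * I = s ^ 5 * (s * I) := by rw [← hks]; ring
    linarith
  rw [le_div_iff₀ (by positivity)]
  calc a₂ / 2 * s * (k * I + b₂) ≤ a₂ / 2 * s * (2 * (s ^ 5 * U x)) := by gcongr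
    _ = a₂ * s ^ 6 * U x := by ring
    _ = a₂ * k * U x := by rw [hks]
end

section
/- Let M > 0 and let u, ũ, v, ṽ be real numbers with 0 ≤ u, ũ, v, ṽ ≤ M. Set U₊ := max(ũ − u, 0) and V₊ := max(v − ṽ, 0). Then U₊ · (ũ ṽ − u v) ≥ −(M/2) · (U₊² + V₊²). -/
/-!
When `ut ≤ u` the right-hand side vanishes and the left-hand side is nonpositive. Otherwise
`ut * vt - u * v = (ut - u) * vt - u * (v - vt) ≥ -M * max (v - vt) 0`,
since `0 ≤ vt` and `0 ≤ u ≤ M`. Multiplying by `max (ut - u) 0 ≥ 0` and applying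
`2 * a * b ≤ a ^ 2 + b ^ 2` gives the bound.
-/

/-- for `M > 0` and `0 ≤ u, ũ, v, ṽ ≤ M`, with `U₊ = (ũ − u)₊` and
`V₊ = (v − ṽ)₊`, one has `U₊ (ũ ṽ − u v) ≥ −(M/2)(U₊² + V₊²)`. -/
theorem stmt14 (M u ut v vt : ℝ) (hM : 0 < M)
    (hu : 0 ≤ u) (hu' : u ≤ M) (hut : 0 ≤ ut) (hut' : ut ≤ M)
    (hv : 0 ≤ v) (hv' : v ≤ M) (hvt : 0 ≤ vt) (hvt' : vt ≤ M) :
    -(M/2) * (max (ut - u) 0 ^ 2 + max (v - vt) 0 ^ 2) ≤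
      max (ut - u) 0 * (ut * vt - u * v) := by
  have hV : 0 ≤ max (v - vt) 0 := le_max_right _ _
  have hV' : v - vt ≤ max (v - vt) 0 := le_max_left _ _
  generalize max (v - vt) 0 = V at hV hV' ⊢
  rcases le_total (ut - u) 0 with h | h
  · rw [max_eq_right h]
    have : 0 ≤ M / 2 * V ^ 2 := by positivity
    linarith
  · rw [max_eq_left h]
    have h1 : 0 ≤ (ut - u) * vt := mul_nonneg h hvt
    have h2 : u * (v - vt) ≤ u * V := mul_le_mul_of_nonneg_left hV' hu
    have h3 : u * V ≤ M * V := mul_le_mul_of_nonneg_right hu' hV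
    have h4 : -(M * V) ≤ ut * vt - u * v := by linarith
    have h5 : (ut - u) * -(M * V) ≤ (ut - u) * (ut * vt - u * v) :=
      mul_le_mul_of_nonneg_left h4 h
    have h6 : 0 ≤ M / 2 * ((ut - u) - V) ^ 2 := by positivity
    linarith
end

section
/- Let M > 0, let m₃ ≥ 1 and m₄ ≥ 1 be real numbers, and let u, ũ, v, ṽ be real numbers with 0 ≤ u, ũ, v, ṽ ≤ M. Set U₊ := max(ũ − u, 0) and V₊ := max(v − ṽ, 0). Then V₊ · ( u^{m₃} v^{m₄} − ũ^{m₃} ṽ^{m₄} ) ≥ −( m₃ · M^{m₃ + m₄ − 1} / 2 ) · (U₊² + V₊²). -/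
open Real

/-!
If `v ≤ ṽ` or `ũ ≤ u`, the right-hand side is nonnegative (by monotonicity of powers) and there is
nothing to do. Otherwise replacing `v` by the smaller `ṽ` gives
`ũ^{m₃} ṽ^{m₄} − u^{m₃} v^{m₄} ≤ (ũ^{m₃} − u^{m₃}) ṽ^{m₄} ≤ m₃ M^{m₃−1} (ũ − u) · M^{m₄}`,
where the last step is the Lipschitz bound `rpow_sub_rpow_le_of_le`, a consequence of Bernoulli's
inequality. Multiplying by `V₊` and using `U₊ V₊ ≤ (U₊² + V₊²) / 2` concludes.
-/

/-- On `[0, M]` the map `x ↦ x ^ m` with `m ≥ 1` is Lipschitz with constant `m * M ^ (m - 1)`. -/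
lemma rpow_sub_rpow_le_of_le {M m a b : ℝ} (hm : 1 ≤ m) (ha : 0 ≤ a) (hab : a < b) (hb : b ≤ M) :
    b ^ m - a ^ m ≤ m * M ^ (m - 1) * (b - a) := by
  have hb0 : 0 < b := ha.trans_lt hab
  have hs : -1 ≤ a / b - 1 := by linarith [div_nonneg ha hb0.le]
  -- Bernoulli's inequality at `a / b`, to be rescaled by `b ^ m`.
  have h1 := one_add_mul_self_le_rpow_one_add hs hm
  rw [add_sub_cancel, div_rpow ha hb0.le, le_div_iff₀ (rpow_pos_of_pos hb0 m)] at h1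
  have h2 : b ^ m = b ^ (m - 1) * b := by
    rw [← rpow_add_one hb0.ne', sub_add_cancel]
  have h3 : (1 + m * (a / b - 1)) * b ^ m = b ^ m - m * b ^ (m - 1) * (b - a) := by
    rw [h2]; field_simp; ring
  have h4 : b ^ (m - 1) ≤ M ^ (m - 1) := rpow_le_rpow hb0.le hb (by linarith)
  have h5 : m * b ^ (m - 1) * (b - a) ≤ m * M ^ (m - 1) * (b - a) :=
    mul_le_mul_of_nonneg_right (mul_le_mul_of_nonneg_left h4 (by linarith)) (by linarith)
  linarith

/-- for `M > 0`, real exponents `m₃, m₄ ≥ 1`, and `0 ≤ u, ũ, v, ṽ ≤ M`,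
with `U₊ = (ũ − u)₊` and `V₊ = (v − ṽ)₊`, one has
`V₊ (u^{m₃} v^{m₄} − ũ^{m₃} ṽ^{m₄}) ≥ −(m₃ M^{m₃+m₄−1}/2)(U₊² + V₊²)`. -/
theorem stmt15 (M m₃ m₄ u ut v vt : ℝ) (hM : 0 < M) (hm₃ : 1 ≤ m₃) (hm₄ : 1 ≤ m₄)
    (hu : 0 ≤ u) (hu' : u ≤ M) (hut : 0 ≤ ut) (hut' : ut ≤ M)
    (hv : 0 ≤ v) (hv' : v ≤ M) (hvt : 0 ≤ vt) (hvt' : vt ≤ M) :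
    -(m₃ * M ^ (m₃ + m₄ - 1) / 2) * (max (ut - u) 0 ^ 2 + max (v - vt) 0 ^ 2) ≤
      max (v - vt) 0 * (u ^ m₃ * v ^ m₄ - ut ^ m₃ * vt ^ m₄) := by
  have hC : 0 ≤ m₃ * M ^ (m₃ + m₄ - 1) := by positivity
  have hneg : -(m₃ * M ^ (m₃ + m₄ - 1) / 2) * (max (ut - u) 0 ^ 2 + max (v - vt) 0 ^ 2) ≤ 0 :=
    mul_nonpos_of_nonpos_of_nonneg (by linarith) (by positivity)
  rcases le_or_gt v vt with h | h
  · rw [max_eq_right (sub_nonpos.2 h)] at hneg ⊢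
    rwa [zero_mul]
  have hvp : vt ^ m₄ ≤ v ^ m₄ := rpow_le_rpow hvt h.le (by linarith)
  rcases le_or_gt ut u with h' | h'
  · refine hneg.trans (mul_nonneg (le_max_right _ _) (sub_nonneg.2 ?_))
    exact mul_le_mul (rpow_le_rpow hut h' (by linarith)) hvp (by positivity) (by positivity)
  rw [max_eq_left (sub_nonneg.2 h.le), max_eq_left (sub_nonneg.2 h'.le)]
  have h1 := rpow_sub_rpow_le_of_le hm₃ hu h' hut'
  have h2 : vt ^ m₄ ≤ M ^ m₄ := rpow_le_rpow hvt hvt' (by linarith)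
  have h3 : M ^ (m₃ + m₄ - 1) = M ^ (m₃ - 1) * M ^ m₄ := by
    rw [← rpow_add hM]; ring_nf
  have h4 : (ut ^ m₃ - u ^ m₃) * vt ^ m₄ ≤ m₃ * M ^ (m₃ - 1) * (ut - u) * M ^ m₄ :=
    mul_le_mul h1 h2 (by positivity)
      (mul_nonneg (by positivity) (sub_nonneg.2 h'.le))
  have h5 : u ^ m₃ * vt ^ m₄ ≤ u ^ m₃ * v ^ m₄ := mul_le_mul_of_nonneg_left hvp (by positivity)
  have h6 : -(m₃ * M ^ (m₃ + m₄ - 1) * (ut - u)) ≤ u ^ m₃ * v ^ m₄ - ut ^ m₃ * vt ^ m₄ := by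
    rw [h3]; linarith
  have h7 := mul_le_mul_of_nonneg_left h6 (sub_nonneg.2 h.le)
  have h8 := mul_nonneg hC (sq_nonneg ((ut - u) - (v - vt)))
  linarith
end

section
/- Let k ≥ 1, let m₃ ≥ 1 and m₄ ≥ 1 be real numbers, let 0 < v̲ ≤ 1, and let U₃ be a real number with 0 ≤ U₃ ≤ 2 k⁻². Define V₃(t) := v̲ · exp( −2^{m₃+1} k⁻¹ t ). Then for every t ≥ 0, V₃′(t) + k · U₃^{m₃} · V₃(t)^{m₄} ≤ 0. -/
/-!
The derivative is `V₃' = -2^(m₃+1) k⁻¹ V₃`. Since `0 < V₃ ≤ 1` and `m₄ ≥ 1`, we have `V₃^m₄ ≤ V₃`.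
Since `k⁻² ≤ 1` and `m₃ ≥ 1`, we have `U₃^m₃ ≤ 2^m₃ (k⁻²)^m₃ ≤ 2^m₃ k⁻²`, so that
`k U₃^m₃ ≤ 2^m₃ k⁻¹ ≤ 2^(m₃+1) k⁻¹`. Hence the derivative absorbs the second term.
-/

open Real

/-- for `k ≥ 1`, real exponents `m₃, m₄ ≥ 1`, `0 < v̲ ≤ 1`, and
`0 ≤ U₃ ≤ 2 k⁻²`, the function `V₃(t) = v̲ exp(−2^{m₃+1} k⁻¹ t)` satisfies
`V₃′(t) + k U₃^{m₃} V₃(t)^{m₄} ≤ 0` for all `t ≥ 0`. -/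
theorem stmt17 (k m₃ m₄ vl U₃ : ℝ) (hk : 1 ≤ k) (hm₃ : 1 ≤ m₃) (hm₄ : 1 ≤ m₄)
    (hvl : 0 < vl) (hvl' : vl ≤ 1) (hU₃ : 0 ≤ U₃) (hU₃' : U₃ ≤ 2 * k ^ (-(2 : ℝ))) :
    ∀ t : ℝ, 0 ≤ t →
      deriv (fun τ : ℝ => vl * Real.exp (-(2 : ℝ) ^ (m₃ + 1) * k⁻¹ * τ)) t
        + k * U₃ ^ m₃ *
          (vl * Real.exp (-(2 : ℝ) ^ (m₃ + 1) * k⁻¹ * t)) ^ m₄ ≤ 0 := by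
  intro t ht
  have hk0 : 0 < k := by linarith
  have h2 : (2 : ℝ) ^ (m₃ + 1) = 2 * (2 : ℝ) ^ m₃ := by
    rw [Real.rpow_add_one (by norm_num), mul_comm]
  have hA : 0 < (2 : ℝ) ^ m₃ := by positivity
  have hd : deriv (fun τ : ℝ => vl * Real.exp (-(2 : ℝ) ^ (m₃ + 1) * k⁻¹ * τ)) t
      = -(2 : ℝ) ^ (m₃ + 1) * k⁻¹ * (vl * Real.exp (-(2 : ℝ) ^ (m₃ + 1) * k⁻¹ * t)) := by
    have h := ((((hasDerivAt_id t).const_mul (-(2 : ℝ) ^ (m₃ + 1) * k⁻¹)).exp).const_mul vl).deriv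
    simp only [id, mul_one] at h
    rw [h]
    ring
  rw [hd]
  have hexp : Real.exp (-(2 : ℝ) ^ (m₃ + 1) * k⁻¹ * t) ≤ 1 := by
    rw [Real.exp_le_one_iff, neg_mul, neg_mul]
    have : 0 ≤ (2 : ℝ) ^ (m₃ + 1) * k⁻¹ * t := by positivity
    linarith
  have hV0 : 0 < vl * Real.exp (-(2 : ℝ) ^ (m₃ + 1) * k⁻¹ * t) := by positivity
  have hV1 : vl * Real.exp (-(2 : ℝ) ^ (m₃ + 1) * k⁻¹ * t) ≤ 1 :=
    mul_le_one₀ hvl' (Real.exp_pos _).le hexp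
  generalize vl * Real.exp (-(2 : ℝ) ^ (m₃ + 1) * k⁻¹ * t) = V at hV0 hV1 ⊢
  have hV : V ^ m₄ ≤ V := Real.rpow_le_self_of_le_one hV0.le hV1 hm₄
  have hq0 : 0 ≤ k ^ (-(2 : ℝ)) := by positivity
  have hq1 : k ^ (-(2 : ℝ)) ≤ 1 := Real.rpow_le_one_of_one_le_of_nonpos hk (by norm_num)
  have hU : U₃ ^ m₃ ≤ 2 ^ m₃ * k ^ (-(2 : ℝ)) := calc
    U₃ ^ m₃ ≤ (2 * k ^ (-(2 : ℝ))) ^ m₃ := Real.rpow_le_rpow hU₃ hU₃' (by linarith)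
    _ = 2 ^ m₃ * (k ^ (-(2 : ℝ))) ^ m₃ := Real.mul_rpow (by norm_num) hq0
    _ ≤ 2 ^ m₃ * k ^ (-(2 : ℝ)) :=
      mul_le_mul_of_nonneg_left (Real.rpow_le_self_of_le_one hq0 hq1 hm₃) hA.le
  have hkq : k * k ^ (-(2 : ℝ)) = k⁻¹ := by
    rw [Real.rpow_neg hk0.le, Real.rpow_two]
    field_simp
  have hkU : k * U₃ ^ m₃ ≤ 2 ^ m₃ * k⁻¹ := calc
    k * U₃ ^ m₃ ≤ k * (2 ^ m₃ * k ^ (-(2 : ℝ))) := mul_le_mul_of_nonneg_left hU hk0.le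
    _ = 2 ^ m₃ * k⁻¹ := by rw [← hkq]; ring
  have hprod : k * U₃ ^ m₃ * V ^ m₄ ≤ 2 ^ m₃ * k⁻¹ * V :=
    mul_le_mul hkU hV (by positivity) (by positivity)
  have hpos : 0 ≤ 2 ^ m₃ * k⁻¹ * V := by positivity
  rw [h2]
  linarith
end
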